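/- If u is a unit, then for every index ℓ the eigenvalue φ_u(ℓ) = S_{uℓ}/S_{1ℓ} is a root of unity; more precisely, if m is the order of the permutation J_u, then φ_u(ℓ)^m = 1. -/

import Mathlib

/-!
Column `ℓ` of `S` is a common eigenvector of the fusion matrices, and `N_u` has eigenvalue
`φ_u(ℓ) = S_{uℓ} / S_{1ℓ}` on it (`sum_verlN_mul`). When `N_u` is the permutation matrix of `J_u`,
this says `S_{J_u(j) ℓ} = φ_u(ℓ) S_{jℓ}`. Iterating from `j = 1` up to the order `m` of `J_u` gives
`S_{1ℓ} = φ_u(ℓ)^m S_{1ℓ}`, and `S_{1ℓ} ≠ 0` can be cancelled.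
-/

open Matrix BigOperators

/-- The Verlinde coefficient `N_{ij}^k = ∑_ℓ S_{iℓ} S_{jℓ} conj(S_{kℓ}) / S_{1ℓ}`. -/
noncomputable def verlN {ι : Type*} [Fintype ι] (one : ι) (S : Matrix ι ι ℂ) (i j k : ι) : ℂ :=
  ∑ ℓ, S i ℓ * S j ℓ * (starRingEnd ℂ) (S k ℓ) / S one ℓ

/-- Column `ℓ` of `S` is an eigenvector of every fusion matrix `N_i`, with eigenvalue
`S_{iℓ} / S_{1ℓ}`: this is the Verlinde formula read through the orthonormality of the columns. -/
lemma sum_verlN_mul {ι : Type*} [Fintype ι] [DecidableEq ι] (one : ι)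
    (S : Matrix ι ι ℂ) (hS : S ∈ Matrix.unitaryGroup ι ℂ) (i j ℓ : ι) :
    ∑ k, verlN one S i j k * S k ℓ = S i ℓ / S one ℓ * S j ℓ := by
  have orth : ∀ m, ∑ k, (starRingEnd ℂ) (S k m) * S k ℓ = if m = ℓ then 1 else 0 := by
    intro m
    have h := congrFun (congrFun (Matrix.mem_unitaryGroup_iff'.mp hS) m) ℓ
    simpa [Matrix.mul_apply, Matrix.star_apply, Matrix.one_apply] using h
  calc ∑ k, verlN one S i j k * S k ℓ
      = ∑ m, S i m * S j m / S one m * ∑ k, (starRingEnd ℂ) (S k m) * S k ℓ := by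
        simp only [verlN, Finset.sum_mul, Finset.mul_sum]
        rw [Finset.sum_comm]
        refine Finset.sum_congr rfl fun m _ => Finset.sum_congr rfl fun k _ => ?_
        ring
    _ = S i ℓ / S one ℓ * S j ℓ := by
        simp only [orth, mul_ite, mul_one, mul_zero, Finset.sum_ite_eq', Finset.sum_ite_eq,
          Finset.mem_univ, if_true]
        ring

theorem stmt_9 {ι : Type*} [Fintype ι] [DecidableEq ι] (one : ι)
    (S : Matrix ι ι ℂ) (hS : S ∈ Matrix.unitaryGroup ι ℂ)
    (hS1 : ∀ ℓ, S one ℓ ≠ 0)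
    (u : ι) (Ju : Equiv.Perm ι)
    (hunit : ∀ j k, verlN one S u j k = if k = Ju j then 1 else 0) :
    ∀ ℓ, (S u ℓ / S one ℓ) ^ orderOf Ju = 1 := by
  intro ℓ
  have step : ∀ j, S (Ju j) ℓ = S u ℓ / S one ℓ * S j ℓ := by
    intro j
    rw [← sum_verlN_mul one S hS u j ℓ]
    simp [hunit]
  have iter : ∀ n : ℕ, S ((Ju ^ n) one) ℓ = (S u ℓ / S one ℓ) ^ n * S one ℓ := by
    intro n
    induction n with
    | zero => simp
    | succ n ih => rw [pow_succ' Ju, Equiv.Perm.mul_apply, step, ih, pow_succ', mul_assoc]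
  have h := iter (orderOf Ju)
  rw [pow_orderOf_eq_one, Equiv.Perm.one_apply] at h
  exact mul_right_cancel₀ (hS1 ℓ) (by rw [one_mul]; exact h.symm)
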